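/- Let m ≥ 1 and let G = QB_m(q_1, …, q_m) be a quasi-banana graph. Set k_{m-1} = Σ_{i=1}^{m-1} q_i + 1 and k_m = Σ_{i=1}^{m} q_i + 1, and assume k_m > 2. Then the divisor D' = (k_{m-1}+1)·u_{m-1,1} + Σ_{j=1}^{q_m} u_{m,j} is the unique u_{m-1,1}-reduced divisor on G of degree k_m + 1 and rank 2; that is, D' is the only u_{m-1,1}-reduced divisor realising the second gonality of G. -/

import Mathlib

open Finset

variable {V : Type*} [Fintype V] [DecidableEq V]

/-- A finite loopless multigraph on vertex type `V`, given by symmetric edge multiplicities. -/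
structure Multigraph (V : Type*) [Fintype V] [DecidableEq V] where
  mult : V → V → ℕ
  symm : ∀ u v, mult u v = mult v u
  loopless : ∀ v, mult v v = 0

namespace Multigraph

def Adj (G : Multigraph V) (u v : V) : Prop := 0 < G.mult u v

/-- A graph is connected. -/
def Connected (G : Multigraph V) : Prop :=
  Nonempty V ∧ ∀ u v : V, Relation.ReflTransGen G.Adj u v

/-- Valence of a vertex. -/
def valence (G : Multigraph V) (v : V) : ℕ := ∑ u, G.mult v u

/-- The Laplacian applied to an integer-valued function on the vertices. -/
def laplacian (G : Multigraph V) (f : V → ℤ) : V → ℤ :=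
  fun w => ∑ u, (G.mult w u : ℤ) * (f w - f u)

/-- Degree of a divisor. -/
def degree (D : V → ℤ) : ℤ := ∑ v, D v

/-- A divisor is effective if all coefficients are nonnegative. -/
def Effective (D : V → ℤ) : Prop := ∀ v, 0 ≤ D v

/-- Linear equivalence of divisors: they differ by a sequence of chip-firing moves,
equivalently by a Laplacian of an integer function. -/
def LinEquiv (G : Multigraph V) (D D' : V → ℤ) : Prop :=
  ∃ f : V → ℤ, D' = D - G.laplacian f

/-- A divisor is winnable if it is linearly equivalent to an effective divisor. -/
def Winnable (G : Multigraph V) (D : V → ℤ) : Prop :=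
  ∃ E : V → ℤ, Effective E ∧ G.LinEquiv D E

/-- The Baker–Norine rank of a divisor: the largest `r` such that `D - E` is winnable for
every effective divisor `E` of degree `r` (the defining set contains all negative integers,
and its supremum is `-1` precisely when `D` itself is not winnable). -/
noncomputable def rank (G : Multigraph V) (D : V → ℤ) : ℤ :=
  sSup {r : ℤ | ∀ E : V → ℤ, Effective E → degree E = r → G.Winnable (fun w => D w - E w)}

/-- The `k`-th gonality of a graph: the smallest degree of a divisor of rank `k`. -/
noncomputable def gonality (G : Multigraph V) (k : ℤ) : ℤ :=
  sInf {d : ℤ | ∃ D : V → ℤ, G.rank D = k ∧ degree D = d}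

/-- A graph is gonality-tight if its second gonality exceeds its first by exactly 1. -/
def GonalityTight (G : Multigraph V) : Prop :=
  G.gonality 2 = G.gonality 1 + 1

/-- A divisor realises the `k`-th gonality if it has rank `k` and degree `gon_k(G)`. -/
def Realises (G : Multigraph V) (k : ℤ) (D : V → ℤ) : Prop :=
  G.rank D = k ∧ degree D = G.gonality k

/-- A divisor is `v`-reduced: nonnegative away from `v`, and set-firing any nonempty set of
vertices not containing `v` creates a negative coefficient inside the set. -/
def Reduced (G : Multigraph V) (v : V) (D : V → ℤ) : Prop :=
  (∀ w, w ≠ v → 0 ≤ D w) ∧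
    ∀ U : Finset V, U.Nonempty → v ∉ U →
      ∃ w ∈ U, D w - ∑ u ∈ Uᶜ, (G.mult w u : ℤ) < 0

/-- The genus (first Betti number) of a graph: `|E| - |V| + 1`. -/
def genus (G : Multigraph V) : ℤ :=
  ((∑ u, ∑ v, G.mult u v : ℕ) : ℤ) / 2 - Fintype.card V + 1

/-- The canonical divisor of a graph. -/
def canonical (G : Multigraph V) : V → ℤ :=
  fun w => (G.valence w : ℤ) - 2

/-- The subgraph induced on a set `S` of vertices (with all edges among `S`). -/
def induce (G : Multigraph V) (S : Finset V) : Multigraph {x // x ∈ S} where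
  mult a b := G.mult a b
  symm a b := G.symm a b
  loopless a := G.loopless a

/-- `G.SeparatedBy u w v` means every path from `w` to `v` passes through `u`. -/
def SeparatedBy (G : Multigraph V) (u w v : V) : Prop :=
  ¬ Relation.ReflTransGen (fun x y => G.Adj x y ∧ x ≠ u ∧ y ≠ u) w v

end Multigraph

/-- Size of the `i`-th level of a quasi-banana graph: level `0` has a single vertex. -/
def qbSize (q : ℕ → ℕ) (i : ℕ) : ℕ := if i = 0 then 1 else q i

/-- `ℓ` is a quasi-banana labelling of `G` exhibiting `G ≅ QB_m(q_1, …, q_m)`: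
`ℓ` is a bijection onto the pairs `(i, j)` with `i ≤ m`, `1 ≤ j ≤ qbSize q i`
(vertex `u_{i,j}` is the vertex labelled `(i,j)`), and the edge multiplicities are:
one edge between distinct vertices of the same level, `(∑_{k=1}^{i} q_k) + 2` edges
between `u_{i,1}` and each `u_{i+1,j}`, and no other edges. -/
def Multigraph.IsQBLabelling (G : Multigraph V) (m : ℕ) (q : ℕ → ℕ) (ℓ : V → ℕ × ℕ) : Prop :=
  (∀ i, 1 ≤ i → i ≤ m → 0 < q i) ∧
  Function.Injective ℓ ∧
  (∀ v : V, (ℓ v).1 ≤ m ∧ 1 ≤ (ℓ v).2 ∧ (ℓ v).2 ≤ qbSize q (ℓ v).1) ∧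
  (∀ i j : ℕ, i ≤ m → 1 ≤ j → j ≤ qbSize q i → ∃ v, ℓ v = (i, j)) ∧
  (∀ v w : V, v ≠ w → G.mult v w =
    if (ℓ v).1 = (ℓ w).1 then 1
    else if (ℓ v).1 + 1 = (ℓ w).1 ∧ (ℓ v).2 = 1 then (∑ i ∈ Finset.Icc 1 (ℓ v).1, q i) + 2
    else if (ℓ w).1 + 1 = (ℓ v).1 ∧ (ℓ w).2 = 1 then (∑ i ∈ Finset.Icc 1 (ℓ w).1, q i) + 2
    else 0)

/-- A graph is a quasi-banana graph if it is isomorphic to some `QB_m(N)`. -/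
def Multigraph.IsQuasiBanana (G : Multigraph V) : Prop :=
  ∃ (m : ℕ) (q : ℕ → ℕ) (ℓ : V → ℕ × ℕ), G.IsQBLabelling m q ℓ

/-- The graph obtained from `G'` by attaching a complete graph `K_n`: `n` new vertices
pairwise joined by exactly one edge, each joined to `v` by exactly `k+1` edges. -/
def attachComplete (G' : Multigraph V) (v : V) (k n : ℕ) : Multigraph (V ⊕ Fin n) where
  mult x y :=
    match x, y with
    | Sum.inl a, Sum.inl b => G'.mult a b
    | Sum.inl a, Sum.inr _ => if a = v then k + 1 else 0
    | Sum.inr _, Sum.inl b => if b = v then k + 1 else 0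
    | Sum.inr i, Sum.inr j => if i = j then 0 else 1
  symm := by
    rintro (a | i) (b | j)
    · exact G'.symm a b
    · rfl
    · rfl
    · by_cases h : i = j
      · simp [h]
      · simp [h, Ne.symm h]
  loopless := by
    rintro (a | i)
    · exact G'.loopless a
    · simp

/-! Write `k = k_{m-1}`, `K = k_m`, `p = u_{m-1,1}`, and call level `m` the top level.

The `p`-reducedness of `D'` follows from Dhar's burning argument, since all vertices are connected
through edges of multiplicity at least two and `D'` is at most one away from `p`. Its rank comes
from the equivalences `(k_i + 1)·u_{i,1} + ∑_j u_{i+1,j} ∼ (k_{i+1} + 1)·u_{i+1,l}`, which reduce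
the removal of two chips to lower and lower levels.

Uniqueness is a count. If `p` can be fired while `t ≥ 1` top vertices are not, then the divisor has
at least `t * (K + 1 - t) = K + (t - 1) * (K - t)` chips, hence at least `K`, with equality only for
`t = 1` since `t ≤ q_m < K`. Let `D` be `p`-reduced of rank two and degree `K + 1`. If `D` vanishes
at a top vertex `u`, then winning `D - p - u` takes such a firing from `D - p`, so `D = D' + p - u`;
removing a further chip from `u` and one from a second vertex next to `p` then leaves `p` too poor
to be fired. If `D` is at least two on the whole top level, the count in lower levels shows that
`D - p` already has `k` chips outside the top level, which is too many. So `D` is positive on the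
top level and equal to one at some top vertex `u`, and winning `D - 2u` requires `k + 1` chips at
`p`. -/

namespace Multigraph

section Divisor

variable {α : Type*} [Fintype α] {D E : α → ℤ}

theorem degree_add (D E : α → ℤ) : degree (D + E) = degree D + degree E :=
  sum_add_distrib

theorem degree_sub (D E : α → ℤ) : degree (D - E) = degree D - degree E :=
  sum_sub_distrib D E

theorem degree_single [DecidableEq α] (x : α) (c : ℤ) : degree (Pi.single x c) = c :=
  Fintype.sum_pi_single' x c

theorem eq_of_le_of_degree_le (hle : E ≤ D) (hdeg : degree D ≤ degree E) : D = E := by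
  have hsum : ∑ x, E x = ∑ x, D x := le_antisymm (sum_le_sum fun x _ => hle x) hdeg
  exact funext fun x =>
    ((sum_eq_sum_iff_of_le fun x _ => hle x).1 hsum x (mem_univ x)).symm

theorem eq_single_of_forall_ne [DecidableEq α] {u : α} (h : ∀ x, x ≠ u → D x = 0) :
    D = Pi.single u (degree D) := by
  have hdeg : degree D = D u := Fintype.sum_eq_single u h
  funext x
  by_cases hx : x = u
  · subst hx; simp [hdeg]
  · simp [h x hx, hx]

theorem Effective.degree_nonneg (hE : Effective E) : 0 ≤ degree E :=
  sum_nonneg fun x _ => hE x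

theorem Effective.apply_le_degree (hE : Effective E) (x : α) : E x ≤ degree E :=
  single_le_sum (fun y _ => hE y) (mem_univ x)

theorem finite_setOf_effective_degree_eq (d : ℤ) :
    {E : α → ℤ | Effective E ∧ degree E = d}.Finite := by
  classical
  exact (Set.finite_Icc (0 : α → ℤ) fun _ => d).subset
    fun E ⟨hE, hd⟩ => ⟨hE, fun x => hd ▸ hE.apply_le_degree x⟩

theorem exists_pos_of_degree_pos (h : 0 < degree E) : ∃ x, 0 < E x := by
  obtain ⟨x, -, hx⟩ := exists_lt_of_sum_lt (s := univ) (f := fun _ : α => (0 : ℤ)) (g := E)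
    (by simpa [degree] using h)
  exact ⟨x, hx⟩

end Divisor

theorem Effective.add {α : Type*} {D E : α → ℤ} (hD : Effective D) (hE : Effective E) :
    Effective (D + E) :=
  fun x => add_nonneg (hD x) (hE x)

theorem effective_single {α : Type*} [DecidableEq α] (x : α) {c : ℤ} (hc : 0 ≤ c) :
    Effective (Pi.single x c) :=
  show (0 : α → ℤ) ≤ Pi.single x c from Pi.single_nonneg.2 hc

theorem Effective.sub_single {α : Type*} [DecidableEq α] {E : α → ℤ} (hE : Effective E) {x : α}
    (hx : 0 < E x) : Effective (E - Pi.single x 1) := by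
  intro y
  by_cases hy : y = x
  · subst hy
    simpa using Int.add_one_le_of_lt hx
  · simpa [hy] using hE y

variable {G : Multigraph V} {D D' E f : V → ℤ} {A B S : Finset V} {v w x y z c r s u : V}

/-! ### The Laplacian -/

theorem laplacian_zero (G : Multigraph V) : G.laplacian 0 = 0 := by
  funext x; simp [laplacian]

theorem laplacian_add (G : Multigraph V) (f g : V → ℤ) :
    G.laplacian (f + g) = G.laplacian f + G.laplacian g := by
  funext x
  simp only [laplacian, Pi.add_apply, ← sum_add_distrib]
  exact sum_congr rfl fun y _ => by ring

theorem laplacian_neg (G : Multigraph V) (f : V → ℤ) : G.laplacian (-f) = -G.laplacian f := by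
  funext x
  simp only [laplacian, Pi.neg_apply, ← sum_neg_distrib]
  exact sum_congr rfl fun y _ => by ring

theorem laplacian_sub (G : Multigraph V) (f g : V → ℤ) :
    G.laplacian (f - g) = G.laplacian f - G.laplacian g := by
  rw [sub_eq_add_neg, laplacian_add, laplacian_neg, sub_eq_add_neg]

theorem sum_laplacian (G : Multigraph V) (f : V → ℤ) (S : Finset V) :
    ∑ x ∈ S, G.laplacian f x = ∑ x ∈ S, ∑ y ∈ Sᶜ, (G.mult x y : ℤ) * (f x - f y) := by
  have hinner : ∑ x ∈ S, ∑ y ∈ S, (G.mult x y : ℤ) * (f x - f y) = 0 := by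
    have hanti : ∑ x ∈ S, ∑ y ∈ S, (G.mult x y : ℤ) * (f x - f y)
        = -∑ x ∈ S, ∑ y ∈ S, (G.mult x y : ℤ) * (f x - f y) := by
      simp only [← sum_neg_distrib]
      refine sum_comm.trans ?_
      exact sum_congr rfl fun x _ => sum_congr rfl fun y _ => by rw [G.symm y x]; ring
    exact self_eq_neg.1 hanti
  simp only [laplacian, ← sum_add_sum_compl S, sum_add_distrib, hinner, zero_add]

theorem degree_laplacian (G : Multigraph V) (f : V → ℤ) : degree (G.laplacian f) = 0 := by
  simpa [degree] using G.sum_laplacian f univ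

theorem laplacian_eq_sum_compl (G : Multigraph V) (hf : ∀ y ∈ A, f y = f x) :
    G.laplacian f x = ∑ y ∈ Aᶜ, (G.mult x y : ℤ) * (f x - f y) := by
  rw [laplacian, ← sum_add_sum_compl A, sum_eq_zero fun y hy => by rw [hf y hy]; ring, zero_add]

theorem laplacian_indicator_of_mem (G : Multigraph V) (hx : x ∈ A) :
    G.laplacian ((A : Set V).indicator 1) x = ∑ y ∈ Aᶜ, (G.mult x y : ℤ) := by
  rw [G.laplacian_eq_sum_compl (A := A) fun y hy => by simp [hx, hy]]
  refine sum_congr rfl fun y hy => ?_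
  simp [hx, mem_compl.1 hy]

theorem laplacian_indicator_of_notMem (G : Multigraph V) (hx : x ∉ A) :
    G.laplacian ((A : Set V).indicator 1) x = -∑ y ∈ A, (G.mult x y : ℤ) := by
  rw [G.laplacian_eq_sum_compl (A := Aᶜ) fun y hy => by simp [hx, mem_compl.1 hy],
    compl_compl, ← sum_neg_distrib]
  refine sum_congr rfl fun y hy => ?_
  simp [hx, hy]

theorem Connected.eq_of_laplacian_eq_zero (hG : G.Connected) (hf : G.laplacian f = 0) (x y : V) :
    f x = f y := by
  obtain ⟨z, -, hz⟩ := exists_max_image univ f ⟨x, mem_univ x⟩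
  suffices hmax : ∀ w, f w = f z by rw [hmax x, hmax y]
  intro w
  induction hG.2 z w with
  | refl => rfl
  | @tail b c _ hadj hb =>
    have hnonneg : ∀ u ∈ univ, 0 ≤ (G.mult b u : ℤ) * (f b - f u) := fun u hu =>
      mul_nonneg (by positivity) (by linarith [hz u hu])
    have hterm := (sum_eq_zero_iff_of_nonneg hnonneg).1 (congrFun hf b) c (mem_univ c)
    have hadj' : (G.mult b c : ℤ) ≠ 0 := by exact_mod_cast hadj.ne'
    linarith [(mul_eq_zero.1 hterm).resolve_left hadj']

/-! ### Linear equivalence and rank -/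

theorem LinEquiv.symm (h : G.LinEquiv D E) : G.LinEquiv E D := by
  obtain ⟨f, rfl⟩ := h
  exact ⟨-f, by rw [laplacian_neg]; abel⟩

theorem LinEquiv.trans (h : G.LinEquiv D D') (h' : G.LinEquiv D' E) : G.LinEquiv D E := by
  obtain ⟨f, rfl⟩ := h
  obtain ⟨g, rfl⟩ := h'
  exact ⟨f + g, by rw [laplacian_add]; abel⟩

theorem LinEquiv.sub_right (h : G.LinEquiv D E) (C : V → ℤ) : G.LinEquiv (D - C) (E - C) := by
  obtain ⟨f, rfl⟩ := h
  exact ⟨f, by abel⟩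

theorem LinEquiv.degree_eq (h : G.LinEquiv D E) : degree D = degree E := by
  obtain ⟨f, rfl⟩ := h
  rw [degree_sub, degree_laplacian, sub_zero]

theorem Effective.winnable (hD : Effective D) : G.Winnable D :=
  ⟨D, hD, 0, by rw [laplacian_zero, sub_zero]⟩

theorem Winnable.of_linEquiv (hD : G.Winnable D) (h : G.LinEquiv D E) : G.Winnable E :=
  let ⟨C, hC, hDC⟩ := hD
  ⟨C, hC, h.symm.trans hDC⟩

theorem Winnable.mono (hD : G.Winnable D) (h : D ≤ E) : G.Winnable E := by
  obtain ⟨_, hC, f, rfl⟩ := hD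
  exact ⟨E - G.laplacian f, fun x => (hC x).trans (sub_le_sub_right (h x) _), f, rfl⟩

theorem Winnable.degree_nonneg (hD : G.Winnable D) : 0 ≤ degree D := by
  obtain ⟨C, hC, hDC⟩ := hD
  exact hDC.degree_eq ▸ hC.degree_nonneg

/- Without a vertex every positive `r` lies in this set, and its `sSup` is a junk value. -/
theorem isGreatest_rank [Nonempty V] (G : Multigraph V) (D : V → ℤ) :
    IsGreatest {r : ℤ | ∀ E : V → ℤ, Effective E → degree E = r → G.Winnable (D - E)}
      (G.rank D) := by
  obtain ⟨v⟩ := ‹Nonempty V›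
  have hbdd : BddAbove {r : ℤ | ∀ E : V → ℤ, Effective E → degree E = r →
      G.Winnable (D - E)} := by
    refine ⟨max 0 (degree D), fun r hr => ?_⟩
    rcases le_total r 0 with hr0 | hr0
    · exact le_max_of_le_left hr0
    · have hwin := hr _ (effective_single v hr0) (degree_single v r)
      have hdeg := hwin.degree_nonneg
      rw [degree_sub, degree_single] at hdeg
      exact le_max_of_le_right (sub_nonneg.1 hdeg)
  refine ⟨Int.csSup_mem ⟨-1, fun E hE hdeg => ?_⟩ hbdd, fun r hr => le_csSup hbdd hr⟩
  linarith [hE.degree_nonneg]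

theorem le_rank [Nonempty V] {r : ℤ}
    (h : ∀ E : V → ℤ, Effective E → degree E = r → G.Winnable (D - E)) : r ≤ G.rank D :=
  (G.isGreatest_rank D).2 h

theorem winnable_sub_of_degree_le_rank [Nonempty V] (hE : Effective E)
    (h : degree E ≤ G.rank D) : G.Winnable (D - E) := by
  obtain ⟨v⟩ := ‹Nonempty V›
  have hC := effective_single v (sub_nonneg.2 h)
  have hwin := (G.isGreatest_rank D).1 _ (hE.add hC)
    (by rw [degree_add, degree_single]; ring)
  exact hwin.mono (sub_le_sub_left (le_add_of_nonneg_right hC) D)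

theorem two_le_rank_iff [Nonempty V] :
    2 ≤ G.rank D ↔ ∀ x y, G.Winnable (D - Pi.single x 1 - Pi.single y 1) := by
  refine ⟨fun h x y => ?_, fun h => le_rank fun E hE hdeg => ?_⟩
  · rw [sub_sub]
    refine winnable_sub_of_degree_le_rank
      ((effective_single x zero_le_one).add (effective_single y zero_le_one)) ?_
    rwa [degree_add, degree_single, degree_single]
  · obtain ⟨x, hx⟩ := exists_pos_of_degree_pos (E := E) (by omega)
    have hE' := hE.sub_single hx
    have hdeg' : degree (E - Pi.single x 1) = 1 := by rw [degree_sub, degree_single, hdeg]; rfl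
    obtain ⟨y, hy⟩ := exists_pos_of_degree_pos (E := E - Pi.single x 1) (by omega)
    have hrest : E - Pi.single x 1 - Pi.single y 1 = 0 :=
      eq_of_le_of_degree_le (hE'.sub_single hy)
        (by rw [degree_sub, degree_single, hdeg']; simp [degree])
    have hE2 : E = Pi.single x 1 + Pi.single y 1 := by
      rwa [sub_sub, sub_eq_zero] at hrest
    rw [hE2, ← sub_sub]
    exact h x y

/-! ### Legal firings and reduced divisors -/

/-- Firing every vertex of `A` once leaves no vertex of `A` in debt; reducedness and Dhar's
burning argument are phrased through such sets. Chips outside `A` only increase, so nothing is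
asked of them. -/
def Legal (G : Multigraph V) (D : V → ℤ) (A : Finset V) : Prop :=
  ∀ x ∈ A, ∑ y ∈ Aᶜ, (G.mult x y : ℤ) ≤ D x

theorem Legal.sum_mult_le (h : G.Legal D A) (hx : x ∈ A) {T : Finset V} (hT : Disjoint T A) :
    ∑ y ∈ T, (G.mult x y : ℤ) ≤ D x :=
  (sum_le_sum_of_subset_of_nonneg (subset_compl_iff_disjoint_right.2 hT)
    fun _ _ _ => by positivity).trans (h x hx)

theorem Legal.mult_le (h : G.Legal D A) (hx : x ∈ A) (hy : y ∉ A) : (G.mult x y : ℤ) ≤ D x := by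
  simpa using h.sum_mult_le hx (disjoint_singleton_left.2 hy)

theorem Legal.nonneg (h : G.Legal D A) (hx : x ∈ A) : 0 ≤ D x := by
  simpa using h.sum_mult_le hx (disjoint_empty_left A)

theorem Legal.mono (h : G.Legal D A) (hDE : ∀ x ∈ A, D x ≤ E x) : G.Legal E A :=
  fun x hx => (h x hx).trans (hDE x hx)

theorem Legal.effective_sub_laplacian (h : G.Legal D A) (hD : Effective D) :
    Effective (D - G.laplacian ((A : Set V).indicator 1)) := by
  intro x
  rw [Pi.sub_apply]
  by_cases hx : x ∈ A
  · rw [G.laplacian_indicator_of_mem hx]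
    exact sub_nonneg.2 (h x hx)
  · rw [G.laplacian_indicator_of_notMem hx, sub_neg_eq_add]
    exact add_nonneg (hD x) (sum_nonneg fun y _ => by positivity)

theorem legal_of_forall_lt {a : ℤ} (hval : ∀ x ∈ A, f x = a)
    (hlt : ∀ x ∈ A, ∀ y ∉ A, G.mult x y ≠ 0 → f y < a)
    (hnonneg : ∀ x ∈ A, 0 ≤ (D - G.laplacian f) x) : G.Legal D A := by
  intro x hx
  calc ∑ y ∈ Aᶜ, (G.mult x y : ℤ)
      ≤ ∑ y ∈ Aᶜ, (G.mult x y : ℤ) * (f x - f y) := by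
        refine sum_le_sum fun y hy => ?_
        by_cases hxy : G.mult x y = 0
        · simp [hxy]
        · have hfy := hlt x hx y (mem_compl.1 hy) hxy
          exact le_mul_of_one_le_right (by positivity) (by linarith [hval x hx])
    _ = G.laplacian f x :=
        (G.laplacian_eq_sum_compl fun y hy => (hval y hy).trans (hval x hx).symm).symm
    _ ≤ D x := sub_nonneg.1 (hnonneg x hx)

theorem Winnable.exists_legal (h : G.Winnable D) (hw : D w < 0) :
    ∃ A : Finset V, A.Nonempty ∧ w ∉ A ∧ G.Legal D A := by
  obtain ⟨_, hE, f, rfl⟩ := h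
  obtain ⟨z, -, hz⟩ := exists_max_image univ f ⟨w, mem_univ w⟩
  have hlegal : G.Legal D {x | f x = f z} :=
    legal_of_forall_lt (fun x hx => (mem_filter_univ x).1 hx)
      (fun _ _ y hy _ => (hz y (mem_univ y)).lt_of_ne fun e => hy ((mem_filter_univ y).2 e))
      fun x _ => hE x
  exact ⟨_, ⟨z, by simp⟩, fun hwA => hw.not_ge (hlegal.nonneg hwA), hlegal⟩

theorem reduced_iff_legal :
    G.Reduced v D ↔ (∀ w, w ≠ v → 0 ≤ D w) ∧
      ∀ A : Finset V, A.Nonempty → G.Legal D A → v ∈ A := by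
  refine and_congr_right fun _ => forall_congr' fun A => imp_congr_right fun _ => ?_
  rw [not_imp_comm]
  simp only [Legal, not_exists, not_and, sub_neg, not_lt]

theorem Reduced.congr_of_ne (h : G.Reduced v D) (hE : ∀ x, x ≠ v → E x = D x) :
    G.Reduced v E := by
  refine ⟨fun w hw => hE w hw ▸ h.1 w hw, fun A hA hv => ?_⟩
  obtain ⟨w, hw, hlt⟩ := h.2 A hA hv
  exact ⟨w, hw, by rwa [hE w (ne_of_mem_of_not_mem hw hv)]⟩

theorem Reduced.exists_legal (hE : G.Reduced v E) (hle : ∀ x, x ≠ v → D x ≤ E x)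
    (hD : G.Winnable D) (hw : D w < 0) : ∃ A, v ∈ A ∧ w ∉ A ∧ G.Legal D A := by
  obtain ⟨A, hA, hwA, hlegal⟩ := hD.exists_legal hw
  refine ⟨A, by_contra fun hv => hv ?_, hwA, hlegal⟩
  exact (reduced_iff_legal.1 hE).2 A hA
    (hlegal.mono fun x hx => hle x (ne_of_mem_of_not_mem hx hv))

theorem Reduced.apply_nonneg (hE : G.Reduced v E) (hle : ∀ x, x ≠ v → D x ≤ E x)
    (hD : G.Winnable D) : 0 ≤ D v := by
  by_contra hneg
  obtain ⟨A, hv, hv', -⟩ := hE.exists_legal hle hD (not_le.1 hneg)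
  exact hv' hv

theorem Reduced.effective_sub_single (hD : G.Reduced v D)
    (hw : G.Winnable (D - Pi.single v 1)) : Effective (D - Pi.single v 1) := by
  intro x
  by_cases hx : x = v
  · exact hx ▸ hD.apply_nonneg (fun y hy => by simp [hy]) hw
  · simpa [hx] using hD.1 x hx

theorem reduced_of_forall_le_one
    (hconn : ∀ x y, Relation.ReflTransGen (fun a b => 2 ≤ G.mult a b) x y)
    (hnonneg : ∀ x, x ≠ v → 0 ≤ D x) (hle : ∀ x, x ≠ v → D x ≤ 1) : G.Reduced v D := by
  refine reduced_iff_legal.2 ⟨hnonneg, fun A ⟨x, hx⟩ hlegal => ?_⟩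
  by_contra hv
  have hburn : ∀ y, y ∉ A := by
    intro y
    induction hconn v y with
    | refl => exact hv
    | @tail b c _ hbc hb =>
      intro hc
      have hcb := hlegal.mult_le hc hb
      have hDc := hle c (ne_of_mem_of_not_mem hc hv)
      rw [G.symm c b] at hcb
      omega
  exact hburn x hx

/- Among the functions `f` with `f v = 0` and `D - Δf` effective, the one with the largest sum
gives a reduced divisor: a legal firing avoiding `v` would increase the sum. Connectedness bounds
the choice, since then `f` is determined by `D - Δf`. -/
theorem Connected.exists_reduced (hG : G.Connected) (v : V) (hD : Effective D) :
    ∃ E, Effective E ∧ G.LinEquiv D E ∧ G.Reduced v E := by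
  let F : Set (V → ℤ) := {f | f v = 0 ∧ Effective (D - G.laplacian f)}
  have hfin : F.Finite := by
    refine Set.Finite.of_injOn (f := fun f => D - G.laplacian f)
      (t := {E | Effective E ∧ degree E = degree D})
      (fun f hf => ⟨hf.2, by rw [degree_sub, degree_laplacian, sub_zero]⟩) (fun f hf g hg hfg => ?_)
      (finite_setOf_effective_degree_eq (degree D))
    have hlap : G.laplacian (f - g) = 0 := by
      rw [laplacian_sub, sub_right_injective hfg, sub_self]
    funext x
    have hconst := hG.eq_of_laplacian_eq_zero hlap x v
    rw [Pi.sub_apply, Pi.sub_apply, hf.1, hg.1, sub_self] at hconst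
    exact sub_eq_zero.1 hconst
  obtain ⟨f, hf, hmax⟩ := F.exists_max_image degree hfin
    ⟨0, rfl, by rwa [laplacian_zero, sub_zero]⟩
  refine ⟨_, hf.2, ⟨f, rfl⟩, reduced_iff_legal.2 ⟨fun w _ => hf.2 w, fun A hA hlegal => ?_⟩⟩
  by_contra hv
  have hmem : f + (A : Set V).indicator 1 ∈ F := by
    refine ⟨by simp [hf.1, hv], ?_⟩
    rw [laplacian_add, ← sub_sub]
    exact hlegal.effective_sub_laplacian hf.2
  have hdeg : degree ((A : Set V).indicator 1) = #A := by
    simp [degree, Set.indicator_apply]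
  have hle := hmax _ hmem
  rw [degree_add, hdeg] at hle
  have hpos : (0 : ℤ) < #A := by exact_mod_cast hA.card_pos
  linarith

/-! ### Vertex sets attached at a single vertex -/

/-- Edges leaving `S` all start at `c`, so that divisors on the two sides of `c` can be compared
separately. It is not required that `c ∈ S`. -/
def AttachedAt (G : Multigraph V) (S : Finset V) (c : V) : Prop :=
  ∀ x ∈ S, x ≠ c → ∀ y ∉ S, G.mult x y = 0

theorem AttachedAt.le_apply_of_reduced (hS : G.AttachedAt S c) (hr : r ∈ S) (hD : G.Reduced r D)
    (hnonneg : ∀ x ∉ S, 0 ≤ (D - G.laplacian f) x) (hx : x ∉ S) : f x ≤ f c := by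
  by_contra! hlt
  obtain ⟨z, hz, hmax⟩ := exists_max_image Sᶜ f ⟨x, mem_compl.2 hx⟩
  have hcz : f c < f z := hlt.trans_le (hmax x (mem_compl.2 hx))
  have hlegal : G.Legal D {y ∈ Sᶜ | f y = f z} := by
    refine legal_of_forall_lt (fun y hy => (mem_filter.1 hy).2) (fun y hy w hw hyw => ?_)
      fun y hy => hnonneg y (mem_compl.1 (mem_filter.1 hy).1)
    by_cases hwS : w ∈ S
    · have hwc : w = c := by
        by_contra hwc
        exact hyw (G.symm w y ▸ hS w hwS hwc y (mem_compl.1 (mem_filter.1 hy).1))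
      exact hwc ▸ hcz
    · exact (hmax w (mem_compl.2 hwS)).lt_of_ne
        fun e => hw (mem_filter.2 ⟨mem_compl.2 hwS, e⟩)
  have hrA := (reduced_iff_legal.1 hD).2 _ ⟨z, mem_filter.2 ⟨hz, Eq.refl (f z)⟩⟩ hlegal
  exact mem_compl.1 (mem_filter.1 hrA).1 hr

theorem AttachedAt.sum_eq_of_reduced (hS : G.AttachedAt S c) (hr : r ∈ S) (hs : s ∈ S)
    (hD : G.Reduced r D) (hE : G.Reduced s E) (h : G.LinEquiv D E) :
    ∑ x ∈ S, E x = ∑ x ∈ S, D x := by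
  obtain ⟨f, rfl⟩ := h
  have hconst : ∀ y ∉ S, f y = f c := by
    refine fun y hy => le_antisymm
      (hS.le_apply_of_reduced hr hD (fun x hx => hE.1 x (ne_of_mem_of_not_mem hs hx).symm) hy)
      (neg_le_neg_iff.1 (hS.le_apply_of_reduced (f := -f) hs hE (fun x hx => ?_) hy))
    rw [laplacian_neg, sub_neg_eq_add, sub_add_cancel]
    exact hD.1 x (ne_of_mem_of_not_mem hr hx).symm
  simp only [Pi.sub_apply, sum_sub_distrib]
  rw [sum_laplacian, sub_eq_self]
  refine sum_eq_zero fun x hx => sum_eq_zero fun y hy => ?_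
  by_cases hxc : x = c
  · rw [hxc, hconst y (mem_compl.1 hy), sub_self, mul_zero]
  · rw [hS x hx hxc y (mem_compl.1 hy), Nat.cast_zero, zero_mul]

theorem AttachedAt.linEquiv_single (hB : G.AttachedAt B u) (hu : u ∈ B)
    (hin : ∀ w ∈ B, w ≠ u → D w = 0) (hout : ∀ w ∉ B, D w = G.mult w u) :
    G.LinEquiv D (Pi.single u (degree D)) := by
  have hzero : ∀ w, w ≠ u → (D - G.laplacian ((↑Bᶜ : Set V).indicator 1)) w = 0 := by
    intro w hw
    rw [Pi.sub_apply]
    by_cases hwB : w ∈ B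
    · rw [G.laplacian_indicator_of_notMem (by simpa using hwB), hin w hwB hw,
        sum_eq_zero fun y hy => by rw [hB w hwB hw y (mem_compl.1 hy), Nat.cast_zero]]
      simp
    · rw [G.laplacian_indicator_of_mem (mem_compl.2 hwB), compl_compl, hout w hwB,
        sum_eq_single_of_mem u hu fun y hy hyu => by rw [G.symm, hB y hy hyu w hwB, Nat.cast_zero],
        sub_self]
  refine ⟨(↑Bᶜ : Set V).indicator 1, ?_⟩
  rw [eq_single_of_forall_ne hzero, degree_sub, degree_laplacian, sub_zero]

/-! ### Levels -/

section Levels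

variable {α : Type*} [Fintype α] {x : α}

/-- The vertices `u_{i,1}, …, u_{i,q_i}` of a quasi-banana graph, `lev` recording the first
index. -/
def level (lev : α → ℕ) (i : ℕ) : Finset α := {x | lev x = i}

/-- The vertices of levels `0, …, i`; their number is the paper's `k_i = q_1 + ⋯ + q_i + 1`. -/
def lower (lev : α → ℕ) (i : ℕ) : Finset α := {x | lev x ≤ i}

variable {lev : α → ℕ} {i : ℕ}

@[simp] theorem mem_level : x ∈ level lev i ↔ lev x = i := by simp [level]

@[simp] theorem mem_lower : x ∈ lower lev i ↔ lev x ≤ i := by simp [lower]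

theorem sum_lower_succ {M : Type*} [AddCommMonoid M] (lev : α → ℕ) (i : ℕ) (f : α → M) :
    ∑ x ∈ lower lev (i + 1), f x = ∑ x ∈ lower lev i, f x + ∑ x ∈ level lev (i + 1), f x := by
  classical
  have hdisj : Disjoint (lower lev i) (level lev (i + 1)) :=
    disjoint_left.2 fun x hx hx' =>
      (Nat.lt_succ_of_le (mem_lower.1 hx)).ne (mem_level.1 hx')
  rw [← sum_union hdisj]
  refine sum_congr (ext fun x => ?_) fun _ _ => rfl
  simp only [mem_union, mem_lower, mem_level]
  omega

theorem card_lower_succ (lev : α → ℕ) (i : ℕ) :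
    #(lower lev (i + 1)) = #(lower lev i) + #(level lev (i + 1)) := by
  simpa only [card_eq_sum_ones] using sum_lower_succ lev i fun _ => 1

end Levels

/-! ### Quasi-banana graphs -/

/-- The structure of a quasi-banana graph as seen by its level function: `lev` is the level and
`p i` stands for `u_{i,1}`, through which level `i + 1` is attached to the levels below. The
sizes `q_i` do not appear; the edge multiplicity `q_1 + ⋯ + q_i + 2` is `#(lower lev i) + 1`.
Values `p i` with `m < i` are irrelevant. -/
structure IsQBLevelling (G : Multigraph V) (m : ℕ) (lev : V → ℕ) (p : ℕ → V) : Prop where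
  lev_le (x : V) : lev x ≤ m
  lev_pivot {i : ℕ} (hi : i ≤ m) : lev (p i) = i
  eq_pivot_zero {x : V} (hx : lev x = 0) : x = p 0
  mult_of_lev_eq {x y : V} (hxy : x ≠ y) (hlev : lev x = lev y) : G.mult x y = 1
  mult_pivot {i : ℕ} {y : V} (hy : lev y = i + 1) : G.mult (p i) y = #(lower lev i) + 1
  attachedAt_lower (i : ℕ) : G.AttachedAt (lower lev i) (p i)

/-- The divisor `(k_i + 1)·u_{i,1} + ∑_j u_{i+1,j}`; for `i = m - 1` this is the divisor `D'` of
the theorem. -/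
def qbDivisor (lev : V → ℕ) (p : ℕ → V) (i : ℕ) : V → ℤ :=
  Pi.single (p i) (#(lower lev i) + 1 : ℤ) + fun x => if lev x = i + 1 then 1 else 0

section qbDivisor

variable {lev : V → ℕ} {p : ℕ → V} {i : ℕ}

theorem qbDivisor_of_ne (hx : x ≠ p i) :
    qbDivisor lev p i x = if lev x = i + 1 then 1 else 0 := by
  simp [qbDivisor, hx]

theorem single_le_qbDivisor : Pi.single (p i) (#(lower lev i) + 1 : ℤ) ≤ qbDivisor lev p i :=
  le_add_of_nonneg_right fun x => by dsimp only; split_ifs <;> simp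

theorem effective_qbDivisor : Effective (qbDivisor lev p i) :=
  fun x => (effective_single (p i) (by positivity) x).trans (single_le_qbDivisor x)

theorem degree_qbDivisor (lev : V → ℕ) (p : ℕ → V) (i : ℕ) :
    degree (qbDivisor lev p i) = #(lower lev (i + 1)) + 1 := by
  have hlevel : degree (fun x => if lev x = i + 1 then 1 else 0) = #(level lev (i + 1)) := by
    simp [degree, level]
  rw [qbDivisor, degree_add, degree_single, hlevel, card_lower_succ]
  push_cast
  ring

end qbDivisor

namespace IsQBLevelling

variable {m n i : ℕ} {lev : V → ℕ} {p : ℕ → V}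

theorem card_lower_pos (h : G.IsQBLevelling m lev p) (hi : i ≤ m) : 0 < #(lower lev i) :=
  card_pos.2 ⟨p i, mem_lower.2 (h.lev_pivot hi).le⟩

theorem lower_zero (h : G.IsQBLevelling m lev p) : lower lev 0 = {p 0} := by
  ext x
  rw [mem_lower, Nat.le_zero, mem_singleton]
  exact ⟨h.eq_pivot_zero, fun hx => hx ▸ h.lev_pivot (Nat.zero_le m)⟩

theorem lower_eq_univ (h : G.IsQBLevelling m lev p) : lower lev m = univ :=
  eq_univ_of_forall fun x => mem_lower.2 (h.lev_le x)

theorem ne_pivot_of_lt_lev (h : G.IsQBLevelling m lev p) (hx : i < lev x) : x ≠ p i := by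
  rintro rfl
  exact hx.ne' (h.lev_pivot (hx.le.trans (h.lev_le _)))

theorem two_le_mult_pivot (h : G.IsQBLevelling m lev p) (hx : lev x = i + 1) :
    2 ≤ G.mult (p i) x := by
  have hpos := h.card_lower_pos (i := i) (by have := h.lev_le x; omega)
  have hmult := h.mult_pivot hx
  omega

theorem reflTransGen_two_le_mult (h : G.IsQBLevelling m lev p) (x y : V) :
    Relation.ReflTransGen (fun a b => 2 ≤ G.mult a b) x y := by
  have hroot : ∀ i x, lev x = i → Relation.ReflTransGen (fun a b => 2 ≤ G.mult a b) (p 0) x := by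
    intro i
    induction i with
    | zero => exact fun x hx => h.eq_pivot_zero hx ▸ .refl
    | succ i ih =>
      intro x hx
      have hi : i ≤ m := by have := h.lev_le x; omega
      exact (ih (p i) (h.lev_pivot hi)).tail (h.two_le_mult_pivot hx)
  have : Std.Symm fun a b => 2 ≤ G.mult a b := ⟨fun a b hab => by rwa [G.symm]⟩
  exact (Std.Symm.symm _ _ (hroot _ x rfl)).trans (hroot _ y rfl)

theorem connected (h : G.IsQBLevelling m lev p) : G.Connected :=
  ⟨⟨p 0⟩, fun x y =>
    Relation.ReflTransGen.mono (fun _ _ hab => two_pos.trans_le hab) x y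
      (h.reflTransGen_two_le_mult x y)⟩

theorem qbDivisor_pivot (h : G.IsQBLevelling m lev p) (hi : i ≤ m) :
    qbDivisor lev p i (p i) = #(lower lev i) + 1 := by
  simp [qbDivisor, h.lev_pivot hi]

theorem qbDivisor_of_lev_eq (h : G.IsQBLevelling m lev p) (hx : lev x = i + 1) :
    qbDivisor lev p i x = 1 := by
  rw [qbDivisor_of_ne (h.ne_pivot_of_lt_lev (by omega)), if_pos hx]

theorem reduced_qbDivisor (h : G.IsQBLevelling m lev p) (i : ℕ) :
    G.Reduced (p i) (qbDivisor lev p i) :=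
  reduced_of_forall_le_one h.reflTransGen_two_le_mult (fun x _ => effective_qbDivisor x)
    fun x hx => by rw [qbDivisor_of_ne hx]; split_ifs <;> simp

theorem qbDivisor_linEquiv_single (h : G.IsQBLevelling m lev p) (hu : lev u = i + 1) :
    G.LinEquiv (qbDivisor lev p i) (Pi.single u (#(lower lev (i + 1)) + 1 : ℤ)) := by
  let B : Finset V := {x | x = u ∨ u = p (i + 1) ∧ i + 1 < lev x}
  have hmem : ∀ x, x ∈ B ↔ x = u ∨ u = p (i + 1) ∧ i + 1 < lev x := fun x => by simp [B]
  have hB : G.AttachedAt B u := by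
    intro x hx hxu y hy
    obtain ⟨hup, hlx⟩ := ((hmem x).1 hx).resolve_left hxu
    rw [hmem, not_or] at hy
    have hly : lev y ≤ i + 1 := not_lt.1 fun hly => hy.2 ⟨hup, hly⟩
    rw [G.symm]
    exact h.attachedAt_lower (i + 1) y (mem_lower.2 hly) (hup ▸ hy.1) x (by simpa using hlx)
  rw [← degree_qbDivisor lev p i]
  refine hB.linEquiv_single ((hmem u).2 (.inl rfl)) (fun w hw hwu => ?_) fun w hw => ?_
  · obtain ⟨-, hlw⟩ := ((hmem w).1 hw).resolve_left hwu
    rw [qbDivisor_of_ne (h.ne_pivot_of_lt_lev (by omega)), if_neg (by omega)]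
  · rw [hmem, not_or] at hw
    by_cases hwp : w = p i
    · have hi : i ≤ m := by have := h.lev_le u; omega
      rw [hwp, h.qbDivisor_pivot hi, h.mult_pivot hu, Nat.cast_succ]
    rw [qbDivisor_of_ne hwp]
    rcases lt_trichotomy (lev w) (i + 1) with hlw | hlw | hlw
    · rw [if_neg hlw.ne, h.attachedAt_lower i w (by simpa using Nat.le_of_lt_succ hlw) hwp u
        (by simp [hu]), Nat.cast_zero]
    · rw [if_pos hlw, h.mult_of_lev_eq hw.1 (hlw.trans hu.symm), Nat.cast_one]
    · rw [if_neg hlw.ne', G.symm, h.attachedAt_lower (i + 1) u (by simp [hu])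
        (fun hup => hw.2 ⟨hup, hlw⟩) w (by simpa using hlw), Nat.cast_zero]

/-! ### The rank of the distinguished divisor -/

theorem winnable_qbDivisor_sub_of_lower (h : G.IsQBLevelling m lev p) (hi : i ≤ m)
    (hlower : ∀ x y, lev x ≤ i → lev y ≤ i →
      G.Winnable (Pi.single (p i) (#(lower lev i) + 1 : ℤ) - Pi.single x 1 - Pi.single y 1))
    (hx : lev x ≤ i + 1) (hy : lev y ≤ i + 1) :
    G.Winnable (qbDivisor lev p i - Pi.single x 1 - Pi.single y 1) := by
  wlog hyx : lev y ≤ lev x generalizing x y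
  · rw [sub_right_comm]
    exact this hy hx (le_of_not_ge hyx)
  rcases Nat.le_add_one_iff.1 hx with hlx | hlx
  · exact (hlower x y hlx (hyx.trans hlx)).mono
      (sub_le_sub_right (sub_le_sub_right single_le_qbDivisor _) _)
  have htop : Pi.single (p i) (#(lower lev i) + 1 : ℤ) ≤ qbDivisor lev p i - Pi.single x 1 := by
    intro w
    by_cases hw : w = x
    · subst hw
      simp [h.qbDivisor_of_lev_eq hlx, h.ne_pivot_of_lt_lev (show i < lev w by omega)]
    · simpa [hw] using single_le_qbDivisor w
  rcases Nat.le_add_one_iff.1 hy with hly | hly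
  · refine (hlower (p i) y (h.lev_pivot hi).le hly).mono (sub_le_sub_right ?_ _)
    exact (sub_le_self _ (effective_single (p i) zero_le_one)).trans htop
  by_cases hxy : x = y
  · subst hxy
    refine Winnable.of_linEquiv (Effective.winnable ?_)
      (((h.qbDivisor_linEquiv_single hlx).sub_right _).sub_right _).symm
    rw [← Pi.single_sub, ← Pi.single_sub]
    exact effective_single x (by
      have := card_lower_succ lev i
      have := card_pos.2 ⟨x, mem_level.2 hlx⟩
      omega)
  · have heff := effective_qbDivisor.sub_single (x := x) (by rw [h.qbDivisor_of_lev_eq hlx]; simp)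
    refine (heff.sub_single ?_).winnable
    simp [h.qbDivisor_of_lev_eq hly, Ne.symm hxy]

theorem winnable_single_pivot_sub (h : G.IsQBLevelling m lev p) (hi : i ≤ m) (hx : lev x ≤ i)
    (hy : lev y ≤ i) :
    G.Winnable (Pi.single (p i) (#(lower lev i) + 1 : ℤ) - Pi.single x 1 - Pi.single y 1) := by
  induction i generalizing x y with
  | zero =>
    rw [h.eq_pivot_zero (Nat.le_zero.1 hx), h.eq_pivot_zero (Nat.le_zero.1 hy), h.lower_zero,
      ← Pi.single_sub, ← Pi.single_sub]
    exact (effective_single _ (by simp)).winnable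
  | succ i ih =>
    have hi' : i ≤ m := by omega
    exact (h.winnable_qbDivisor_sub_of_lower hi' (fun _ _ => ih hi') hx hy).of_linEquiv
      (((h.qbDivisor_linEquiv_single (h.lev_pivot hi)).sub_right _).sub_right _)

theorem rank_qbDivisor (h : G.IsQBLevelling (n + 1) lev p) : G.rank (qbDivisor lev p n) = 2 := by
  have : Nonempty V := ⟨p 0⟩
  have hn : n ≤ n + 1 := n.le_succ
  refine le_antisymm (not_lt.1 fun hlt => ?_) (two_le_rank_iff.2 fun x y =>
    h.winnable_qbDivisor_sub_of_lower hn (fun _ _ => h.winnable_single_pivot_sub hn)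
      (h.lev_le x) (h.lev_le y))
  set u := p (n + 1)
  have hu : lev u = n + 1 := h.lev_pivot le_rfl
  have hup : u ≠ p n := h.ne_pivot_of_lt_lev (by omega)
  have hE : Effective (Pi.single u 2 + Pi.single (p n) 1) :=
    (effective_single u zero_le_two).add (effective_single (p n) zero_le_one)
  have hwin := winnable_sub_of_degree_le_rank (G := G) (D := qbDivisor lev p n) hE
    (by rw [degree_add, degree_single, degree_single]; omega)
  obtain ⟨A, hpA, huA, hlegal⟩ := (h.reduced_qbDivisor n).exists_legal (w := u)
    (fun x _ => sub_le_self _ (hE x)) hwin (by simp [h.qbDivisor_of_lev_eq hu, hup])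
  have hmult := hlegal.mult_le hpA huA
  rw [h.mult_pivot hu] at hmult
  simp [h.qbDivisor_pivot hn, hup.symm] at hmult

/-! ### Counting the unfired vertices of a level -/

/- With `t` unfired vertices in level `i + 1` and `K = k_{i+1}`, the left-hand side is
`t * (K + 1 - t)`: the pivot `u_{i,1}` loses `t * (k_i + 1)` chips and each of the `q_{i+1} - t`
fired vertices of the level loses `t`. -/
theorem card_lower_add_le_sum_of_legal (h : G.IsQBLevelling m lev p) (hi : i ≤ m)
    (hD : Effective D) (hA : G.Legal D A) (hp : p i ∈ A) :
    (#(lower lev (i + 1)) + (#(level lev (i + 1) \ A) - 1) *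
        (#(lower lev (i + 1)) - #(level lev (i + 1) \ A)) : ℤ)
      ≤ ∑ x ∈ lower lev (i + 1), D x := by
  set T := level lev (i + 1) \ A
  have hTA : Disjoint T A := sdiff_disjoint
  have hT : ∀ y ∈ T, lev y = i + 1 ∧ y ∉ A := fun y hy => by simpa [T] using hy
  have hpivot : (#T * (#(lower lev i) + 1) : ℤ) ≤ ∑ x ∈ lower lev i, D x := by
    refine le_trans ?_ ((hA.sum_mult_le hp hTA).trans
      (single_le_sum (fun x _ => hD x) (mem_lower.2 (h.lev_pivot hi).le)))
    rw [sum_congr rfl fun y hy => by rw [h.mult_pivot (hT y hy).1]]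
    simp
  have hfired : ∀ x ∈ level lev (i + 1) ∩ A, (#T : ℤ) ≤ D x := by
    intro x hx
    obtain ⟨hlx, hxA⟩ := mem_inter.1 hx
    refine le_of_eq_of_le ?_ (hA.sum_mult_le hxA hTA)
    rw [sum_congr rfl fun y hy => by rw [h.mult_of_lev_eq (ne_of_mem_of_not_mem hxA (hT y hy).2)
      ((mem_level.1 hlx).trans (hT y hy).1.symm)]]
    simp
  have hlevel : (#(level lev (i + 1) ∩ A) * #T : ℤ) ≤ ∑ x ∈ level lev (i + 1), D x := by
    rw [← nsmul_eq_mul]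
    exact (card_nsmul_le_sum _ _ _ hfired).trans
      (sum_le_sum_of_subset_of_nonneg inter_subset_left fun x _ _ => hD x)
  have hsplit : #(level lev (i + 1) ∩ A) + #T = #(level lev (i + 1)) :=
    card_inter_add_card_sdiff _ _
  rw [sum_lower_succ, card_lower_succ, ← hsplit]
  push_cast
  linarith

theorem card_sdiff_bounds (h : G.IsQBLevelling m lev p) (hu : lev u = i + 1) (huA : u ∉ A) :
    1 ≤ #(level lev (i + 1) \ A) ∧ #(level lev (i + 1) \ A) < #(lower lev (i + 1)) := by
  refine ⟨card_pos.2 ⟨u, by simp [hu, huA]⟩, ?_⟩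
  have hle : #(level lev (i + 1) \ A) ≤ #(level lev (i + 1)) := card_le_card sdiff_subset
  have hpos := h.card_lower_pos (i := i) (by have := h.lev_le u; omega)
  rw [card_lower_succ]
  omega

theorem card_lower_le_sum_of_legal (h : G.IsQBLevelling m lev p) (hD : Effective D)
    (hA : G.Legal D A) (hp : p i ∈ A) (hu : lev u = i + 1) (huA : u ∉ A) :
    (#(lower lev (i + 1)) : ℤ) ≤ ∑ x ∈ lower lev (i + 1), D x := by
  obtain ⟨hT, hTK⟩ := h.card_sdiff_bounds hu huA
  refine le_trans (le_add_of_nonneg_right (mul_nonneg ?_ ?_))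
    (h.card_lower_add_le_sum_of_legal (by have := h.lev_le u; omega) hD hA hp) <;> omega

theorem mem_of_legal_of_sum_le (h : G.IsQBLevelling m lev p) (hD : Effective D)
    (hA : G.Legal D A) (hp : p i ∈ A) (hu : lev u = i + 1) (huA : u ∉ A)
    (hsum : ∑ x ∈ lower lev (i + 1), D x ≤ #(lower lev (i + 1))) (hx : lev x = i + 1)
    (hxu : x ≠ u) : x ∈ A := by
  by_contra hxA
  have hT : 1 < #(level lev (i + 1) \ A) :=
    one_lt_card.2 ⟨x, by simp [hx, hxA], u, by simp [hu, huA], hxu⟩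
  have hTK := (h.card_sdiff_bounds hu huA).2
  have hcount := h.card_lower_add_le_sum_of_legal (by have := h.lev_le u; omega) hD hA hp
  have hpos : (0 : ℤ) < (#(level lev (i + 1) \ A) - 1) *
      (#(lower lev (i + 1)) - #(level lev (i + 1) \ A)) := mul_pos (by omega) (by omega)
  linarith

theorem card_lower_le_sum (h : G.IsQBLevelling m lev p) (hi : i ≤ m) (hD : G.Reduced (p i) D)
    (hwin : ∀ w, G.Winnable (D - Pi.single w 1)) :
    (#(lower lev i) : ℤ) ≤ ∑ x ∈ lower lev i, D x := by
  induction i generalizing D with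
  | zero =>
    have hp := hD.effective_sub_single (hwin (p 0)) (p 0)
    simpa [h.lower_zero] using hp
  | succ i ih =>
    have hi' : i ≤ m := by omega
    have hDeff : Effective D := fun x =>
      (hD.effective_sub_single (hwin _) x).trans
        (sub_le_self _ (effective_single (p (i + 1)) zero_le_one x))
    obtain ⟨E, hE, hDE, hEred⟩ := h.connected.exists_reduced (p i) hDeff
    have hEwin : ∀ w, G.Winnable (E - Pi.single w 1) := fun w =>
      (hwin w).of_linEquiv (hDE.sub_right _)
    rw [← (h.attachedAt_lower (i + 1)).sum_eq_of_reduced (mem_lower.2 (h.lev_pivot hi).le)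
      (mem_lower.2 ((h.lev_pivot hi').trans_le i.le_succ)) hD hEred hDE]
    by_cases hpos : ∀ x ∈ level lev (i + 1), 1 ≤ E x
    · have hlevel := card_nsmul_le_sum _ _ _ hpos
      rw [nsmul_one] at hlevel
      rw [sum_lower_succ, card_lower_succ, Nat.cast_add]
      exact add_le_add (ih hi' hEred hEwin) hlevel
    · push Not at hpos
      obtain ⟨u, hu, hEu⟩ := hpos
      obtain ⟨A, hpA, huA, hlegal⟩ := hEred.exists_legal (w := u)
        (fun x _ => sub_le_self _ (effective_single u zero_le_one x)) (hEwin u)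
        (by simpa using hEu)
      exact h.card_lower_le_sum_of_legal hE
        (hlegal.mono fun x _ => sub_le_self _ (effective_single u zero_le_one x)) hpA
        (mem_level.1 hu) huA

/-! ### Uniqueness -/

theorem qbDivisor_le_add_single_of_legal (h : G.IsQBLevelling m lev p) (hD : Effective D)
    (hA : G.Legal D A) (hp : p i ∈ A) (hu : lev u = i + 1) (huA : u ∉ A)
    (hlevel : ∀ x, lev x = i + 1 → x ≠ u → x ∈ A) : qbDivisor lev p i ≤ D + Pi.single u 1 := by
  intro x
  have hDx := (hD x).trans (le_add_of_nonneg_right (effective_single u zero_le_one x))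
  by_cases hxp : x = p i
  · subst hxp
    have hmult := hA.mult_le hp huA
    rw [h.mult_pivot hu, Nat.cast_succ] at hmult
    rw [h.qbDivisor_pivot (by have := h.lev_le u; omega)]
    exact hmult.trans (le_add_of_nonneg_right (effective_single u zero_le_one _))
  rw [qbDivisor_of_ne hxp]
  split_ifs with hlx
  · by_cases hxu : x = u
    · subst hxu
      simpa using hD x
    · have hmult := hA.mult_le (hlevel x hlx hxu) huA
      rw [h.mult_of_lev_eq hxu (hlx.trans hu.symm)] at hmult
      simpa [hxu] using hmult
  · exact hDx

theorem add_single_eq_of_apply_eq_zero (h : G.IsQBLevelling (n + 1) lev p)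
    (hD : G.Reduced (p n) D) (hdeg : degree D = #(lower lev (n + 1)) + 1)
    (hwin : ∀ x y, G.Winnable (D - Pi.single x 1 - Pi.single y 1)) (hu : lev u = n + 1)
    (hDu : D u = 0) : D + Pi.single u 1 = qbDivisor lev p n + Pi.single (p n) 1 := by
  have hup : u ≠ p n := h.ne_pivot_of_lt_lev (by omega)
  have hD₁ : Effective (D - Pi.single (p n) 1) := hD.effective_sub_single
    ((hwin (p n) u).mono (sub_le_self _ (effective_single u zero_le_one)))
  have hdeg₁ : degree (D - Pi.single (p n) 1) = #(lower lev (n + 1)) := by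
    rw [degree_sub, degree_single, hdeg, add_sub_cancel_right]
  obtain ⟨A, hpA, huA, hlegal⟩ := hD.exists_legal (w := u)
    (fun x hx => by simpa [hx] using effective_single u zero_le_one x) (hwin (p n) u)
    (by simp [hDu, hup])
  replace hlegal : G.Legal (D - Pi.single (p n) 1) A :=
    hlegal.mono fun x _ => sub_le_self _ (effective_single u zero_le_one x)
  have hsum : ∑ x ∈ lower lev (n + 1), (D - Pi.single (p n) 1 : V → ℤ) x ≤
      #(lower lev (n + 1)) := by
    rw [← hdeg₁, h.lower_eq_univ, degree]
  have heq := eq_of_le_of_degree_le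
    (h.qbDivisor_le_add_single_of_legal hD₁ hlegal hpA hu huA fun x =>
      h.mem_of_legal_of_sum_le hD₁ hlegal hpA hu huA hsum)
    (by rw [degree_add, degree_single, hdeg₁, degree_qbDivisor])
  rw [← heq]
  abel

theorem exists_ne_two_le_mult_pivot (h : G.IsQBLevelling (n + 1) lev p)
    (hcard : 2 < #(lower lev (n + 1))) (hu : lev u = n + 1) :
    ∃ y, y ≠ u ∧ y ≠ p n ∧ 2 ≤ G.mult (p n) y ∧ qbDivisor lev p n y ≤ G.mult y u := by
  by_cases hy : ∃ y, y ≠ u ∧ lev y = n + 1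
  · obtain ⟨y, hyu, hly⟩ := hy
    exact ⟨y, hyu, h.ne_pivot_of_lt_lev (by omega), h.two_le_mult_pivot hly,
      by rw [h.qbDivisor_of_lev_eq hly, h.mult_of_lev_eq hyu (hly.trans hu.symm), Nat.cast_one]⟩
  · push Not at hy
    have hlevel : level lev (n + 1) = {u} := by
      ext y
      rw [mem_level, mem_singleton]
      exact ⟨fun hly => by_contra fun hyu => hy y hyu hly, fun hyu => hyu ▸ hu⟩
    rw [card_lower_succ, hlevel, card_singleton] at hcard
    obtain _ | k := n
    · simp [h.lower_zero] at hcard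
    · have hk : lev (p k) = k := h.lev_pivot (by omega)
      have hk1 : lev (p (k + 1)) = k + 1 := h.lev_pivot (by omega)
      have hne : p k ≠ p (k + 1) := fun e => by rw [e] at hk; omega
      refine ⟨p k, fun e => by rw [e] at hk; omega, hne, ?_, ?_⟩
      · rw [G.symm]
        exact h.two_le_mult_pivot hk1
      · rw [qbDivisor_of_ne hne, if_neg (by omega)]
        positivity

theorem add_single_ne_qbDivisor_add_single (h : G.IsQBLevelling (n + 1) lev p)
    (hcard : 2 < #(lower lev (n + 1))) (hD : G.Reduced (p n) D)
    (hwin : ∀ x y, G.Winnable (D - Pi.single x 1 - Pi.single y 1)) (hu : lev u = n + 1) :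
    D + Pi.single u 1 ≠ qbDivisor lev p n + Pi.single (p n) 1 := by
  intro heq
  obtain ⟨y, hyu, hyp, hpy, hle⟩ := h.exists_ne_two_le_mult_pivot hcard hu
  have hup : u ≠ p n := h.ne_pivot_of_lt_lev (by omega)
  have hDu : D u = 0 := by
    simpa [h.qbDivisor_of_lev_eq hu, hup] using congrFun heq u
  have hDp : D (p n) = #(lower lev n) + 2 := by
    have hp : D (p n) = #(lower lev n) + 1 + 1 := by
      simpa [h.qbDivisor_pivot n.le_succ, hup.symm] using congrFun heq (p n)
    rwa [add_assoc] at hp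
  have hDy : D y = qbDivisor lev p n y := by
    simpa [hyu, hyp] using congrFun heq y
  obtain ⟨A, hpA, huA, hlegal⟩ := hD.exists_legal (w := u)
    (fun x _ => (sub_le_self _ (effective_single y zero_le_one x)).trans
      (sub_le_self _ (effective_single u zero_le_one x))) (hwin u y) (by simp [hDu, hyu.symm])
  have hyA : y ∉ A := by
    intro hyA
    have hmult : (G.mult y u : ℤ) ≤ qbDivisor lev p n y - 1 := by
      simpa [hyu, hDy] using hlegal.mult_le hyA huA
    omega
  have hpair : (#(lower lev n) + 1 + G.mult (p n) y : ℤ) ≤ #(lower lev n) + 2 := by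
    simpa [sum_pair hyu.symm, h.mult_pivot hu, hup.symm, hyp.symm, hDp] using
      hlegal.sum_mult_le hpA (T := {u, y}) (by simp [huA, hyA])
  omega

theorem eq_qbDivisor_of_apply_eq_one (h : G.IsQBLevelling (n + 1) lev p)
    (hD : G.Reduced (p n) D) (hdeg : degree D = #(lower lev (n + 1)) + 1)
    (htop : ∀ x, lev x = n + 1 → 1 ≤ D x) (hu : lev u = n + 1) (hDu : D u = 1)
    (hwin : G.Winnable (D - Pi.single u 1 - Pi.single u 1)) : D = qbDivisor lev p n := by
  have hpu : p n ≠ u := (h.ne_pivot_of_lt_lev (by omega)).symm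
  obtain ⟨A, hpA, huA, hlegal⟩ := hD.exists_legal (w := u)
    (fun x _ => (sub_le_self _ (effective_single u zero_le_one x)).trans
      (sub_le_self _ (effective_single u zero_le_one x))) hwin (by simp [hDu])
  have hmult := hlegal.mult_le hpA huA
  rw [h.mult_pivot hu] at hmult
  refine eq_of_le_of_degree_le (fun x => ?_) (by rw [hdeg, degree_qbDivisor])
  by_cases hxp : x = p n
  · subst hxp
    rw [h.qbDivisor_pivot n.le_succ]
    simpa [hpu] using hmult
  · rw [qbDivisor_of_ne hxp]
    split_ifs with hx
    exacts [htop x hx, hD.1 x hxp]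

theorem exists_lev_eq_and_apply_lt_two (h : G.IsQBLevelling (n + 1) lev p)
    (hD : G.Reduced (p n) D) (hdeg : degree D = #(lower lev (n + 1)) + 1)
    (hwin : ∀ x, G.Winnable (D - Pi.single (p n) 1 - Pi.single x 1)) :
    ∃ u, lev u = n + 1 ∧ D u < 2 := by
  by_contra! htwo
  have hlower : (#(lower lev n) + 1 : ℤ) ≤ ∑ x ∈ lower lev n, D x := by
    simpa [h.lev_pivot] using h.card_lower_le_sum n.le_succ (D := D - Pi.single (p n) 1)
      (hD.congr_of_ne fun x hx => by simp [hx]) hwin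
  have hlevel : (#(level lev (n + 1)) * 2 : ℤ) ≤ ∑ x ∈ level lev (n + 1), D x := by
    rw [← nsmul_eq_mul]
    exact card_nsmul_le_sum _ D 2 fun x hx => htwo x (mem_level.1 hx)
  have hpos : 0 < #(level lev (n + 1)) := card_pos.2 ⟨p (n + 1), by simp [h.lev_pivot]⟩
  have hsum : degree D = _ := h.lower_eq_univ ▸ sum_lower_succ lev n D
  rw [hdeg, card_lower_succ, Nat.cast_add] at hsum
  omega

theorem eq_qbDivisor (h : G.IsQBLevelling (n + 1) lev p) (hcard : 2 < #(lower lev (n + 1)))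
    (hD : G.Reduced (p n) D) (hdeg : degree D = #(lower lev (n + 1)) + 1)
    (hwin : ∀ x y, G.Winnable (D - Pi.single x 1 - Pi.single y 1)) : D = qbDivisor lev p n := by
  have htop : ∀ x, lev x = n + 1 → 1 ≤ D x := by
    intro x hx
    by_contra! hlt
    have hDx : D x = 0 := le_antisymm (Int.lt_add_one_iff.1 hlt)
      (hD.1 x (h.ne_pivot_of_lt_lev (by omega)))
    exact h.add_single_ne_qbDivisor_add_single hcard hD hwin hx
      (h.add_single_eq_of_apply_eq_zero hD hdeg hwin hx hDx)
  obtain ⟨u, hu, hDu⟩ := h.exists_lev_eq_and_apply_lt_two hD hdeg (hwin (p n))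
  exact h.eq_qbDivisor_of_apply_eq_one hD hdeg htop hu
    (le_antisymm (Int.lt_add_one_iff.1 hDu) (htop u hu)) (hwin u u)

end IsQBLevelling

/-! ### From labellings to level functions -/

namespace IsQBLabelling

variable {m i : ℕ} {q : ℕ → ℕ} {ℓ : V → ℕ × ℕ}

theorem card_level (h : G.IsQBLabelling m q ℓ) (hi : i ≤ m) :
    #(level (fun x => (ℓ x).1) i) = qbSize q i := by
  obtain ⟨-, hinj, hrange, hsurj, -⟩ := h
  have hIcc : #(Icc 1 (qbSize q i)) = qbSize q i := by rw [Nat.card_Icc, Nat.add_sub_cancel]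
  rw [← hIcc]
  refine card_nbij (fun x => (ℓ x).2) (fun x hx => ?_) (fun x hx y hy hxy => ?_) fun j hj => ?_
  · rw [mem_coe, mem_level] at hx
    exact mem_coe.2 (mem_Icc.2 (hx ▸ (hrange x).2))
  · rw [mem_coe, mem_level] at hx hy
    exact hinj (Prod.ext (hx.trans hy.symm) hxy)
  · obtain ⟨hj1, hjq⟩ := mem_Icc.1 (mem_coe.1 hj)
    obtain ⟨x, hx⟩ := hsurj i j hi hj1 hjq
    exact ⟨x, by simp [hx], by simp [hx]⟩

theorem card_lower (h : G.IsQBLabelling m q ℓ) (hi : i ≤ m) :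
    #(lower (fun x => (ℓ x).1) i) = (∑ j ∈ Icc 1 i, q j) + 1 := by
  induction i with
  | zero =>
    have hzero : lower (fun x => (ℓ x).1) 0 = level (fun x => (ℓ x).1) 0 := by ext x; simp
    rw [hzero, h.card_level hi]
    simp [qbSize]
  | succ i ih =>
    rw [card_lower_succ, ih (by omega), h.card_level hi, sum_Icc_succ_top (by omega), qbSize,
      if_neg i.succ_ne_zero]
    ring

theorem isQBLevelling (h : G.IsQBLabelling m q ℓ) {p : ℕ → V} (hp : ∀ i ≤ m, ℓ (p i) = (i, 1)) :
    G.IsQBLevelling m (fun x => (ℓ x).1) p := by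
  obtain ⟨-, hinj, hrange, -, hmult⟩ := id h
  have hpivot : ∀ x, (ℓ x).2 = 1 → x = p (ℓ x).1 := fun x hx =>
    hinj (Prod.ext (by rw [hp _ (hrange x).1]) (by rw [hp _ (hrange x).1, hx]))
  refine
    { lev_le := fun x => (hrange x).1
      lev_pivot := fun hi => by rw [hp _ hi]
      eq_pivot_zero := fun {x} hx => ?_
      mult_of_lev_eq := fun hxy hlev => by rw [hmult _ _ hxy, if_pos hlev]
      mult_pivot := fun {i y} hy => ?_
      attachedAt_lower := fun i x hx hxp y hy => ?_ }
  · obtain ⟨-, hone, hle⟩ := hrange x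
    rw [hx] at hle
    exact hx ▸ hpivot x (le_antisymm hle hone)
  · have hi : i < m := by have := (hrange y).1; omega
    have hpi := hp i hi.le
    have hne : p i ≠ y := by rintro rfl; simp [hpi] at hy
    rw [hmult _ _ hne, h.card_lower hi.le, hpi, if_neg (by simp [hy]), if_pos ⟨hy.symm, rfl⟩]
  · simp only [mem_lower, not_le] at hx hy
    have hxp' : (ℓ x).1 = i → (ℓ x).2 ≠ 1 := fun hi hone => hxp (hi ▸ hpivot x hone)
    rw [hmult x y (by rintro rfl; omega), if_neg (by omega), if_neg (by omega), if_neg (by omega)]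

theorem exists_pivots (h : G.IsQBLabelling m q ℓ) : ∃ p : ℕ → V, ∀ i ≤ m, ℓ (p i) = (i, 1) := by
  have hpivot : ∀ i ≤ m, ∃ x, ℓ x = (i, 1) := fun i hi => by
    refine h.2.2.2.1 i 1 hi le_rfl ?_
    rw [qbSize]
    split_ifs with hi0
    exacts [le_rfl, h.1 i (Nat.one_le_iff_ne_zero.2 hi0) hi]
  have : Nonempty V := (hpivot 0 m.zero_le).nonempty
  choose! p hp using hpivot
  exact ⟨p, hp⟩

end IsQBLabelling

end Multigraph

/-- For a quasi-banana graph `G = QB_m(q_1, …, q_m)` with `m ≥ 1`,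
`k_{m-1} = ∑_{i=1}^{m-1} q_i + 1`, `k_m = ∑_{i=1}^{m} q_i + 1` and `k_m > 2`, the divisor
`D' = (k_{m-1}+1)·u_{m-1,1} + ∑_{j=1}^{q_m} u_{m,j}` is the unique `u_{m-1,1}`-reduced
divisor on `G` of degree `k_m + 1` and rank `2`. -/
theorem stmt18 (G : Multigraph V)
    (m : ℕ) (hm : 1 ≤ m) (q : ℕ → ℕ) (ℓ : V → ℕ × ℕ)
    (hQB : G.IsQBLabelling m q ℓ)
    (km1 km : ℕ)
    (hkm1 : km1 = (∑ i ∈ Finset.Icc 1 (m - 1), q i) + 1)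
    (hkm : km = (∑ i ∈ Finset.Icc 1 m, q i) + 1)
    (hkm2 : 2 < km)
    (vm : V) (hvm : ℓ vm = (m - 1, 1))
    (D' : V → ℤ)
    (hD' : D' = fun w => if w = vm then (km1 : ℤ) + 1 else if (ℓ w).1 = m then 1 else 0) :
    G.Reduced vm D' ∧ Multigraph.degree D' = (km : ℤ) + 1 ∧ G.rank D' = 2 ∧
    ∀ D'' : V → ℤ, G.Reduced vm D'' → Multigraph.degree D'' = (km : ℤ) + 1 →
      G.rank D'' = 2 → D'' = D' := by
  obtain ⟨n, rfl⟩ := Nat.exists_eq_add_of_le' hm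
  obtain ⟨p, hp⟩ := hQB.exists_pivots
  obtain rfl : vm = p n := hQB.2.1 (hvm.trans (hp n n.le_succ).symm)
  have h := hQB.isQBLevelling hp
  rw [Nat.add_sub_cancel, ← hQB.card_lower n.le_succ] at hkm1
  rw [← hQB.card_lower le_rfl] at hkm
  have hD : D' = Multigraph.qbDivisor (fun x => (ℓ x).1) p n := by
    funext x
    by_cases hx : x = p n
    · simp [hD', hx, hkm1, h.qbDivisor_pivot n.le_succ]
    · rw [hD', Multigraph.qbDivisor_of_ne hx]
      exact if_neg hx
  subst hD hkm
  have : Nonempty V := ⟨p n⟩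
  exact ⟨h.reduced_qbDivisor n, Multigraph.degree_qbDivisor _ p n, h.rank_qbDivisor,
    fun D hred hdeg hrank =>
      h.eq_qbDivisor hkm2 hred hdeg (Multigraph.two_le_rank_iff.1 hrank.ge)⟩
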